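/- (Lemma 3) Let n ∈ Im(Ca') with g(n,n) = 1, and let X, Y, Z ∈ Im(Ca') with g(X,n) = g(Y,n) = g(Z,n) = 0. Then −g(n, X×(Y×Z)) = −g((n×X)×Y, Z); that is, the contraction of the 4-form Ψ(W,X,Y,Z) := −g(W, X×(Y×Z)) with the normal vector n coincides with −Ω(JX,Y,Z), where J X := n×X and Ω(X,Y,Z) := g(X×Y,Z). -/

import Mathlib

-- The split octonion algebra Ca' as pairs of real quaternions.
noncomputable section

abbrev Ca : Type := Quaternion ℝ × Quaternion ℝ

namespace Ca

/-- Split octonion multiplication: (a,b)·(c,d) = (ac + (conj d)b, da + b(conj c)). -/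
def mul (x y : Ca) : Ca :=
  (x.1 * y.1 + star y.2 * x.2, y.2 * x.1 + x.2 * star y.1)

/-- The unit (1,0). -/
def one : Ca := (1, 0)

/-- Conjugation conj(a,b) = (conj a, −b). -/
def conj (x : Ca) : Ca := (star x.1, -x.2)

/-- Real part Re(a,b) = re a. -/
def re (x : Ca) : ℝ := x.1.re

/-- Norm form N(a,b) = ‖a‖² − ‖b‖², of signature (4,4). -/
def N (x : Ca) : ℝ := Quaternion.normSq x.1 - Quaternion.normSq x.2

/-- The symmetric bilinear form ⟨x,y⟩ = (N(x+y) − N(x) − N(y))/2. -/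
def bil (x y : Ca) : ℝ := (N (x + y) - N x - N y) / 2

/-- The vector cross product on Im(Ca'): X × Y := X·Y + g(X,Y)·1. -/
def cross (X Y : Ca) : Ca := mul X Y + bil X Y • one

end Ca

/-!
Multiplication is not associative, but `re (x y z)` does not depend on the bracketing, by cyclicity
of the quaternionic real part. Pairing with an imaginary element is minus the real part of the
product and does not see the scalar term of the cross product, so `g(A, B × C)` and `g(A × B, C)`
both equal `-re (A B C)`. Moving the cross product across `g` twice turns `g(n, X × (Y × Z))` into
`g((n × X) × Y, Z)`.
-/

lemma quaternion_re_mul_comm {R : Type*} [CommRing R] (a b : Quaternion R) :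
    (a * b).re = (b * a).re := by
  simp only [Quaternion.re_mul]
  ring

namespace Ca

lemma re_mul_comm (x y : Ca) : re (mul x y) = re (mul y x) := by
  have h_star : (star y.2 * x.2).re = (star x.2 * y.2).re := by
    rw [← Quaternion.re_star, star_mul, star_star]
  simp only [re, mul, Quaternion.re_add, h_star, quaternion_re_mul_comm x.1]

lemma re_mul_assoc (x y z : Ca) : re (mul (mul x y) z) = re (mul x (mul y z)) := by
  obtain ⟨a, b⟩ := x
  obtain ⟨c, d⟩ := y
  obtain ⟨e, f⟩ := z
  have h_bde : (star d * b * e).re = (e * (star d * b)).re := quaternion_re_mul_comm _ _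
  have h_adf : (star f * (d * a)).re = (a * (star f * d)).re := by
    rw [← mul_assoc, quaternion_re_mul_comm]
  have h_bcf : (star f * (b * star c)).re = (star c * (star f * b)).re := by
    rw [← mul_assoc, quaternion_re_mul_comm]
  simp only [re, mul, star_add, star_mul, star_star, add_mul, mul_add, mul_assoc,
    Quaternion.re_add] at h_bde h_adf h_bcf ⊢
  rw [h_bde, h_adf, h_bcf]
  ring

lemma conj_eq_neg_of_re_eq_zero {x : Ca} (hx : re x = 0) : conj x = -x :=
  Prod.ext (Quaternion.star_eq_neg.mpr hx) rfl

lemma re_mul_neg (x y : Ca) : re (mul x (-y)) = -re (mul x y) := by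
  simp only [re, mul, Prod.fst_neg, Prod.snd_neg, star_neg, mul_neg, neg_mul, Quaternion.re_add,
    Quaternion.re_neg, neg_add]

lemma bil_comm (x y : Ca) : bil x y = bil y x := by
  rw [bil, bil, add_comm, sub_right_comm]

lemma bil_eq_re_mul_conj (x y : Ca) : bil x y = re (mul x (conj y)) := by
  simp only [bil, N, re, mul, conj, Prod.fst_add, Prod.snd_add, Quaternion.normSq_add, star_neg,
    neg_mul, Quaternion.re_add, Quaternion.re_neg, quaternion_re_mul_comm (star y.2)]
  ring

lemma bil_eq_neg_re_mul_right {y : Ca} (x : Ca) (hy : re y = 0) :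
    bil x y = -re (mul x y) := by
  rw [bil_eq_re_mul_conj, conj_eq_neg_of_re_eq_zero hy, re_mul_neg]

lemma bil_eq_neg_re_mul_left {x : Ca} (hx : re x = 0) (y : Ca) :
    bil x y = -re (mul x y) := by
  rw [bil_comm, bil_eq_neg_re_mul_right y hx, re_mul_comm]

lemma add_smul_one_mul (x y : Ca) (r : ℝ) : mul (x + r • one) y = mul x y + r • y := by
  ext1 <;>
    simp only [mul, one, Prod.fst_add, Prod.snd_add, Prod.smul_fst, Prod.smul_snd, smul_zero,
      add_zero, add_mul, mul_add, smul_mul_assoc, mul_smul_comm, one_mul, mul_one] <;>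
    abel

lemma bil_add_smul_one_left (x y : Ca) (r : ℝ) : bil (x + r • one) y = bil x y + r * re y := by
  simp only [bil_eq_re_mul_conj, add_smul_one_mul, re, conj, Prod.fst_add, Prod.smul_fst,
    Quaternion.re_add, Quaternion.re_smul, Quaternion.re_star, smul_eq_mul]

lemma bil_cross_right_eq_neg_re_mul_mul {x : Ca} (hx : re x = 0) (y z : Ca) :
    bil x (cross y z) = -re (mul x (mul y z)) := by
  rw [bil_comm, cross, bil_add_smul_one_left, hx, mul_zero, add_zero, bil_comm,
    bil_eq_neg_re_mul_left hx]

lemma bil_cross_left_eq_neg_re_mul_mul (x y : Ca) {z : Ca} (hz : re z = 0) :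
    bil (cross x y) z = -re (mul (mul x y) z) := by
  rw [cross, bil_add_smul_one_left, hz, mul_zero, add_zero, bil_eq_neg_re_mul_right _ hz]

lemma bil_cross_right_eq_bil_cross_left {x z : Ca} (hx : re x = 0) (y : Ca) (hz : re z = 0) :
    bil x (cross y z) = bil (cross x y) z := by
  rw [bil_cross_right_eq_neg_re_mul_mul hx, bil_cross_left_eq_neg_re_mul_mul x y hz, re_mul_assoc]

lemma re_cross (x y : Ca) : re (cross x y) = re (mul x y) + bil x y := by
  simp only [cross, re, one, Prod.fst_add, Prod.smul_fst, Quaternion.re_add, Quaternion.re_smul,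
    Quaternion.re_one, smul_eq_mul, mul_one]

lemma re_cross_eq_zero_left {x : Ca} (hx : re x = 0) (y : Ca) : re (cross x y) = 0 := by
  rw [re_cross, bil_eq_neg_re_mul_left hx, add_neg_cancel]

lemma re_cross_eq_zero_right (x : Ca) {y : Ca} (hy : re y = 0) : re (cross x y) = 0 := by
  rw [re_cross, bil_eq_neg_re_mul_right x hy, add_neg_cancel]

end Ca

theorem iota_Psi_eq_general {n Z : Ca} (X Y : Ca) (hn : Ca.re n = 0) (hZ : Ca.re Z = 0) :
    -(Ca.bil n (Ca.cross X (Ca.cross Y Z))) =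
      -(Ca.bil (Ca.cross (Ca.cross n X) Y) Z) := by
  rw [Ca.bil_cross_right_eq_bil_cross_left hn X (Ca.re_cross_eq_zero_right Y hZ),
    Ca.bil_cross_right_eq_bil_cross_left (Ca.re_cross_eq_zero_left hn X) Y hZ]

/-- Lemma 3: ιₙΨ(X,Y,Z) = −Ω(JX,Y,Z), i.e.
−g(n, X×(Y×Z)) = −g((n×X)×Y, Z). -/
theorem iota_Psi_eq (n X Y Z : Ca)
    (hn : Ca.re n = 0) (hnn : Ca.bil n n = 1)
    (hX : Ca.re X = 0) (hY : Ca.re Y = 0) (hZ : Ca.re Z = 0)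
    (hXn : Ca.bil X n = 0) (hYn : Ca.bil Y n = 0) (hZn : Ca.bil Z n = 0) :
    -(Ca.bil n (Ca.cross X (Ca.cross Y Z))) =
      -(Ca.bil (Ca.cross (Ca.cross n X) Y) Z) :=
  iota_Psi_eq_general X Y hn hZ
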